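/- Let n ≥ 3. Then the polynomial identity H_{2,n}^{({1,1})}(x) = 16(n−1)·(−2x·H_{n−1}(x) + (n(2x²+1)−2)·H_{n−2}(x)) holds for all x. -/

import Mathlib

open Polynomial

/-- Physicists' Hermite polynomials: `H_0 = 1`, `H_n = 2x H_{n-1} - H_{n-1}'`. -/
noncomputable def hermitePhys : ℕ → Polynomial ℝ
  | 0 => 1
  | n + 1 => 2 * Polynomial.X * hermitePhys n - Polynomial.derivative (hermitePhys n)

/-- Exceptional `X_2`-Hermite polynomial for the partition `{1,1}`. -/
noncomputable def XHerm (n : ℕ) (x : ℝ) : ℝ :=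
  Matrix.det
    !![2 * x, 4 * x ^ 2 - 2, (hermitePhys n).eval x;
       2, 8 * x, ((hermitePhys n).derivative).eval x;
       0, 8, ((hermitePhys n).derivative.derivative).eval x]

theorem hermitePhys_deriv (n : ℕ) :
    Polynomial.derivative (hermitePhys (n + 1)) = 2 * ((n : Polynomial ℝ) + 1) * hermitePhys n := by
  induction n with
  | zero => simp [hermitePhys]
  | succ k ih =>
    have h1 : hermitePhys (k + 2) = 2 * Polynomial.X * hermitePhys (k + 1)
      - Polynomial.derivative (hermitePhys (k + 1)) := rfl
    have h2 : hermitePhys (k + 1) = 2 * Polynomial.X * hermitePhys k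
      - Polynomial.derivative (hermitePhys k) := rfl
    have hc : Polynomial.derivative (2 * ((k : Polynomial ℝ) + 1) * hermitePhys k)
        = 2 * ((k : Polynomial ℝ) + 1) * Polynomial.derivative (hermitePhys k) := by
      simp [Polynomial.derivative_mul]
    have hx : Polynomial.derivative (2 * Polynomial.X * hermitePhys (k + 1))
        = 2 * hermitePhys (k + 1)
          + 2 * Polynomial.X * Polynomial.derivative (hermitePhys (k + 1)) := by
      simp [Polynomial.derivative_mul]
    rw [h1, Polynomial.derivative_sub, hx, ih, hc]
    push_cast
    linear_combination (-2 * ((k : Polynomial ℝ) + 1)) * h2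

theorem stmt13 (n : ℕ) (hn : 3 ≤ n) :
    ∀ x : ℝ,
      XHerm n x =
        16 * ((n : ℝ) - 1) *
          (-(2 * x * (hermitePhys (n - 1)).eval x)
            + ((n : ℝ) * (2 * x ^ 2 + 1) - 2) * (hermitePhys (n - 2)).eval x) := by
  intro x
  obtain ⟨m, rfl⟩ : ∃ m, n = m + 2 := ⟨n - 2, by omega⟩
  have e1 : m + 2 - 1 = m + 1 := by omega
  have e2 : m + 2 - 2 = m := by omega
  rw [e1, e2]
  have d1 := hermitePhys_deriv (m + 1)
  have d2 := hermitePhys_deriv m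
  have h1 : hermitePhys (m + 2) = 2 * Polynomial.X * hermitePhys (m + 1)
      - Polynomial.derivative (hermitePhys (m + 1)) := rfl
  have d3 : Polynomial.derivative (Polynomial.derivative (hermitePhys (m + 2)))
      = 2 * ((m : Polynomial ℝ) + 1 + 1) * (2 * ((m : Polynomial ℝ) + 1) * hermitePhys m) := by
    rw [d1, ← d2]
    simp [Polynomial.derivative_mul]
  rw [d2] at h1
  have f1 := congrArg (Polynomial.eval x) d1
  have f3 := congrArg (Polynomial.eval x) d3
  have f0 := congrArg (Polynomial.eval x) h1
  simp only [Polynomial.eval_mul, Polynomial.eval_add, Polynomial.eval_sub, Polynomial.eval_X,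
    Polynomial.eval_natCast, Polynomial.eval_ofNat, Polynomial.eval_one] at f1 f3 f0
  push_cast at f1 ⊢
  unfold XHerm
  rw [Matrix.det_fin_three]
  simp only [Matrix.of_apply, Matrix.cons_val]
  rw [f3, f1, f0]
  ring
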